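/- The micro-state determined by w is an equilibrium of the sampling-domain problem, i.e., the function j ↦ ψ(j)·d_j is constant on ZMod m, if and only if w = ε·χ, where χ is the unique zero-mean solution of the 1D linear nearest-neighbour cell problem with coefficient ψ and parameter a = F/m. In that case the HQC element energy (1/m) Σ_{j ∈ ZMod m} ψ(j)·d_j²/2 equals the homogenized energy density H(ψ)·(F/m)²/2. -/

import Mathlib

/-!
A micro-state is an equilibrium exactly when `w / ε` solves the cell problem, because the corrector
gradient of `w / ε` is the fluctuation part of the discrete strain; this gives the equivalence by
rescaling. For the energy, let `C` be the constant stress `ψ j * d j`. Periodicity makes the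
fluctuations telescope away, so the strains sum to `F`, while `d j = C / ψ j` makes the same sum
`C * ∑ 1 / ψ`; hence `C = H(ψ) * (F / m)`. The energy is half of stress times mean strain, which is
`C * (F / m) / 2`.
-/

/-- A difference quotient on the periodic cell sums to zero, so only the macroscopic strain
contributes to the sum of the discrete strains. -/
lemma sum_strain (m : ℕ) [NeZero m] (F ε : ℝ) (w : ZMod m → ℝ) :
    ∑ j : ZMod m, (F / (m : ℝ) + (w (j + 1) - w j) / ε) = F := by
  have hm : (m : ℝ) ≠ 0 := Nat.cast_ne_zero.mpr (NeZero.ne m)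
  have hshift : ∑ j : ZMod m, w (j + 1) = ∑ j : ZMod m, w j :=
    Equiv.sum_comp (Equiv.addRight (1 : ZMod m)) w
  rw [Finset.sum_add_distrib, ← Finset.sum_div _ fun j => w (j + 1) - w j,
    Finset.sum_sub_distrib, hshift, sub_self, zero_div, add_zero]
  simp only [Finset.sum_const, Finset.card_univ, ZMod.card, nsmul_eq_mul]
  field_simp


/-- For a zero-mean micro-state `w : ZMod m → ℝ` on the sampling
domain, with discrete strains `d j = F/m + (w (j+1) - w j)/ε`, the micro-state is
an equilibrium (i.e. `j ↦ ψ j * d j` is constant) iff `w = ε·χ`, where `χ` is the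
unique zero-mean solution of the cell problem with parameter `a = F/m`.  In that
case the HQC element energy `(1/m) ∑ j, ψ j * (d j)²/2` equals the homogenized
energy density `H(ψ) * (F/m)² / 2`. -/
theorem stmt8 (m : ℕ) [NeZero m] (ψ : ZMod m → ℝ) (hψ : ∀ j, 0 < ψ j)
    (ε F c x₀ : ℝ) (hε : 0 < ε) (w : ZMod m → ℝ) (hw : ∑ j : ZMod m, w j = 0) :
    let dstr : ZMod m → ℝ := fun j => F / (m : ℝ) + (w (j + 1) - w j) / ε
    ((∃ C : ℝ, ∀ j : ZMod m, ψ j * dstr j = C) ↔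
      ∃ χ : ZMod m → ℝ, (∑ j : ZMod m, χ j = 0) ∧
        (∃ C : ℝ, ∀ j : ZMod m, ψ j * (F / (m : ℝ) + (χ (j + 1) - χ j)) = C) ∧
        w = fun j => ε * χ j) ∧
    ((∃ C : ℝ, ∀ j : ZMod m, ψ j * dstr j = C) →
      (1 / (m : ℝ)) * ∑ j : ZMod m, ψ j * dstr j ^ 2 / 2 =
        ((1 / (m : ℝ)) * ∑ j : ZMod m, 1 / ψ j)⁻¹ * (F / (m : ℝ)) ^ 2 / 2) := by
  intro dstr
  have hm : (m : ℝ) ≠ 0 := Nat.cast_ne_zero.mpr (NeZero.ne m)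
  have hε' : ε ≠ 0 := hε.ne'
  refine ⟨⟨?_, ?_⟩, ?_⟩
  · rintro ⟨C, hC⟩
    refine ⟨fun j => w j / ε, ?_, ⟨C, fun j => ?_⟩, ?_⟩
    · rw [← Finset.sum_div, hw, zero_div]
    · rw [← hC j, ← sub_div]
    · funext j
      field_simp
  · rintro ⟨χ, -, ⟨C, hC⟩, rfl⟩
    refine ⟨C, fun j => ?_⟩
    rw [← hC j]
    simp only [dstr]
    field_simp
  · rintro ⟨C, hC⟩
    have hsum : ∑ j, dstr j = F := sum_strain m F ε w
    have hS : 0 < ∑ j : ZMod m, 1 / ψ j :=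
      Finset.sum_pos (fun j _ => one_div_pos.mpr (hψ j)) Finset.univ_nonempty
    have hCS : C * ∑ j : ZMod m, 1 / ψ j = F := by
      rw [← hsum, Finset.mul_sum]
      refine Finset.sum_congr rfl fun j _ => ?_
      have := (hψ j).ne'
      rw [← hC j]
      field_simp
    have hE : ∑ j, ψ j * dstr j ^ 2 / 2 = C * F / 2 := by
      rw [← hsum, Finset.mul_sum, Finset.sum_div]
      refine Finset.sum_congr rfl fun j _ => ?_
      rw [← hC j]
      ring
    rw [hE]
    generalize (∑ j : ZMod m, 1 / ψ j) = S at hS hCS ⊢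
    have hS' := hS.ne'
    rw [← hCS]
    field_simp
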